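/- Let s, t >= 2 be integers and put l := lcm(s,t). The mix of H_s := [3,3,4,3]_{(s,0,0,0)} and H_t := [3,3,4,3]_{(t,0,0,0)} — i.e. the subgroup of H_s x H_t generated by the five pairs (pi_s(a), pi_t(a)), ..., (pi_s(e), pi_t(e)) — is isomorphic to [3,3,4,3]_{(l,0,0,0)}. -/

import Mathlib

/-- Coxeter matrix of the string diagram [3,3,4,3] on generators a,b,c,d,e = 0..4. -/
def cox5 : Fin 5 → Fin 5 → ℕ := fun i j =>
  if i = j then 1
  else if (i : ℕ) + 1 = (j : ℕ) ∨ (j : ℕ) + 1 = (i : ℕ) then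
    (if ((i : ℕ) = 2 ∧ (j : ℕ) = 3) ∨ ((i : ℕ) = 3 ∧ (j : ℕ) = 2) then 4 else 3)
  else 2

def rels5 : Set (FreeGroup (Fin 5)) :=
  Set.range fun p : Fin 5 × Fin 5 => (FreeGroup.of p.1 * FreeGroup.of p.2) ^ cox5 p.1 p.2

/-- The Coxeter group of type [3,3,4,3]. -/
abbrev W5 : Type := PresentedGroup rels5

def v (i : Fin 5) : W5 := PresentedGroup.of i

/-- sigma = d^(cb) = b*c*d*c*b. -/
def sg5 : W5 := v 1 * v 2 * v 3 * v 2 * v 1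
/-- tau = c^(de) = e*d*c*d*e. -/
def tu5 : W5 := v 4 * v 3 * v 2 * v 3 * v 4

/-- [3,3,4,3]_{(s,s,0,0)} : the quotient of [3,3,4,3] by the normal closure of (a σ τ)^{2s}. -/
abbrev Gq (s : ℕ) : Type := W5 ⧸ Subgroup.normalClosure ({(v 0 * sg5 * tu5) ^ (2 * s)} : Set W5)

/-- [3,3,4,3]_{(s,0,0,0)} : the quotient of [3,3,4,3] by the normal closure of (a σ τ σ)^s. -/
abbrev Hq (s : ℕ) : Type := W5 ⧸ Subgroup.normalClosure ({(v 0 * sg5 * tu5 * sg5) ^ s} : Set W5)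

/-- The quotient map W5 → [3,3,4,3]_{(s,s,0,0)}. -/
def piG (s : ℕ) : W5 →* Gq s := QuotientGroup.mk' _

/-- The quotient map W5 → [3,3,4,3]_{(s,0,0,0)}. -/
def piH (s : ℕ) : W5 →* Hq s := QuotientGroup.mk' _

/-!
In `W5 = ⟨a, b, c, d, e⟩` the element `x = aστσ` is the product of `a` and the reflection in the
highest root of the parabolic subgroup `⟨b, c, d, e⟩` of type `F₄`, so it is a translation of the
affine Weyl group `W5`. Its normal closure `T` is generated by `x` and its conjugates by `b`, `cb`
and `dcb`. These four commute, since conjugation carries every commutation needed to a defining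
relation, and they act on `ℤ⁴` as the unit translations, so `T` is free abelian of rank four.

Since `T` is commutative, the normal closure of `x ^ n` is the group `T ^ n` of `n`-th powers, and
since `T` is torsion-free, `T ^ s ∩ T ^ t = T ^ lcm s t`. The mix of `G ⧸ M` and `G ⧸ N` is
`G ⧸ (M ∩ N)`.
-/

section Group

variable {G : Type*} [Group G] {a b g r x x' y y' : G}

theorem commute_of_semiconjBy (hx : SemiconjBy g x x') (hy : SemiconjBy g y y')
    (h : Commute x y) : Commute x' y' :=
  mul_right_cancel (b := g) <| by
    rw [← (hx.mul_right hy).eq, ← (hy.mul_right hx).eq, h.eq]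

theorem semiconjBy_symm_of_mul_self_eq_one (hg : g * g = 1) (h : SemiconjBy g x y) :
    SemiconjBy g y x := by
  rwa [← SemiconjBy.inv_symm_left_iff, inv_eq_of_mul_eq_one_left hg]

/-- The Artin braid relation of length three between `x` and `y`. -/
def BraidRel (x y : G) : Prop := x * y * x = y * x * y

namespace BraidRel

theorem of_semiconjBy (h : BraidRel x y) (hx : SemiconjBy g x x') (hy : SemiconjBy g y y') :
    BraidRel x' y' :=
  mul_right_cancel (b := g) <| by
    rw [← ((hx.mul_right hy).mul_right hx).eq, ← ((hy.mul_right hx).mul_right hy).eq, h]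

theorem semiconjBy (h : BraidRel x y) : SemiconjBy (x * y) x y :=
  h.trans (mul_assoc y x y)

theorem commute_mul_conj (hab : BraidRel a b) (har : BraidRel a r) (hbr : BraidRel b r)
    (hb : b * b = 1) : Commute (a * (b * r * b)) (b * (a * (b * r * b)) * b) := by
  have bb (y : G) : b * (b * y) = y := by rw [← mul_assoc, hb, one_mul]
  have hxy : a * (b * r * b) * (b * (a * (b * r * b)) * b) = a * b * r * (a * b * r) := by
    simp only [mul_assoc, bb, hb, mul_one]
  have hyx : b * (a * (b * r * b)) * b * (a * (b * r * b)) = a * b * r * (a * b * r) := calc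
    _ = b * a * b * r * (a * b * r * b) := by simp only [mul_assoc, bb]
    _ = a * b * (a * r * a) * (b * r * b) := by rw [← hab]; simp only [mul_assoc]
    _ = a * b * r * a * (r * b * r * b) := by rw [har]; simp only [mul_assoc]
    _ = a * b * r * (a * b * r) := by rw [← hbr]; simp only [mul_assoc, hb, mul_one]
  exact hxy.trans hyx.symm

theorem semiconjBy_mul_conj (har : BraidRel a r) (hbr : BraidRel b r) (ha : a * a = 1)
    (hb : b * b = 1) :
    SemiconjBy r (a * (b * r * b)) (a * (b * r * b) * (b * (a * (b * r * b)) * b)⁻¹) := by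
  have aa (y : G) : a * (a * y) = y := by rw [← mul_assoc, ha, one_mul]
  have bb (y : G) : b * (b * y) = y := by rw [← mul_assoc, hb, one_mul]
  have hr : SemiconjBy r (a * (b * r * b)) (a * r * a * b) := by
    change r * (a * (b * r * b)) = a * r * a * b * r
    rw [hbr, har]
    simp only [mul_assoc]
  have hmul : a * r * a * b * (b * (a * (b * r * b)) * b) = a * (b * r * b) := by
    calc
      _ = a * (r * b * r) := by simp only [mul_assoc, aa, bb, hb, mul_one]
      _ = a * (b * r * b) := by rw [hbr]
  rwa [← eq_mul_inv_of_mul_eq hmul]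

end BraidRel

end Group

section CommGroup

variable {A : Type*} [CommGroup A] [IsMulTorsionFree A]

theorem exists_pow_lcm_eq_of_pow_eq_pow {s t : ℕ} {y z : A} (h : y ^ s = z ^ t) :
    ∃ w : A, w ^ Nat.lcm s t = y ^ s := by
  rcases Nat.eq_zero_or_pos s with rfl | hs
  · exact ⟨1, by simp⟩
  set d := Nat.gcd s t with hd
  have hd0 : d ≠ 0 := (Nat.gcd_pos_of_pos_left t hs).ne'
  obtain ⟨m, n, hmn, hsm, htn⟩ := Nat.exists_coprime s t
  rw [← hd] at hsm htn
  have hlcm : Nat.lcm s t = n * s := by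
    refine Nat.eq_of_mul_eq_mul_left (Nat.pos_of_ne_zero hd0) ?_
    rw [Nat.gcd_mul_lcm, ← mul_assoc, mul_comm d n, ← htn, mul_comm]
  have hyz : y ^ m = z ^ n := by
    rw [← pow_left_inj hd0, ← pow_mul, ← pow_mul, ← hsm, ← htn, h]
  obtain ⟨i, j, hij⟩ : IsCoprime (m : ℤ) n := Nat.isCoprime_iff_coprime.mpr hmn
  have hy : y = (z ^ i * y ^ j) ^ n := calc
    y = (y ^ m) ^ i * (y ^ n) ^ j := by
      rw [← zpow_natCast, ← zpow_natCast, ← zpow_mul, ← zpow_mul, ← zpow_add,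
        mul_comm (m : ℤ), mul_comm (n : ℤ), hij, zpow_one]
    _ = (z ^ i * y ^ j) ^ n := by
      rw [hyz, mul_pow, ← zpow_natCast, ← zpow_natCast, ← zpow_natCast, ← zpow_natCast,
        zpow_comm, zpow_comm y]
  exact ⟨z ^ i * y ^ j, by rw [hlcm, pow_mul, ← hy]⟩

end CommGroup

section Group

open scoped IsMulCommutative
open Subgroup

variable {G : Type*} [Group G]

theorem pow_mem_normalClosure_image_pow {S : Set G} [IsMulCommutative (normalClosure S)] (n : ℕ)
    {y : G} (hy : y ∈ normalClosure S) : y ^ n ∈ normalClosure ((· ^ n) '' S) := by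
  induction hy using closure_induction with
  | mem y hy =>
    obtain ⟨x, hx, hxy⟩ := Group.mem_conjugatesOfSet_iff.1 hy
    obtain ⟨c, rfl⟩ := isConj_iff.1 hxy
    rw [conj_pow]
    exact normalClosure_normal.conj_mem _ (subset_normalClosure (Set.mem_image_of_mem _ hx)) c
  | one => simp only [one_pow, one_mem]
  | mul y z hy hz hyn hzn =>
    have hcomm : Commute y z := setLike_mul_comm (s := normalClosure S) hy hz
    rw [hcomm.mul_pow]
    exact mul_mem hyn hzn
  | inv y _ hyn => rw [inv_pow]; exact inv_mem hyn

theorem mem_normalClosure_image_pow_iff {S : Set G} [IsMulCommutative (normalClosure S)] (n : ℕ)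
    {g : G} : g ∈ normalClosure ((· ^ n) '' S) ↔ ∃ y ∈ normalClosure S, y ^ n = g := by
  let P : Subgroup G := (powMonoidHom n : normalClosure S →* normalClosure S).range.map
    (normalClosure S).subtype
  have mem_P {g : G} : g ∈ P ↔ ∃ y ∈ normalClosure S, y ^ n = g :=
    ⟨fun ⟨_, ⟨y, rfl⟩, h⟩ => ⟨y, y.2, h⟩, fun ⟨y, hy, h⟩ => ⟨_, ⟨⟨y, hy⟩, rfl⟩, h⟩⟩
  have : P.Normal := ⟨fun p hp c => by
    obtain ⟨y, hy, rfl⟩ := mem_P.1 hp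
    exact mem_P.2 ⟨c * y * c⁻¹, normalClosure_normal.conj_mem y hy c, conj_pow⟩⟩
  have hSP : (· ^ n) '' S ⊆ P := by
    rintro _ ⟨x, hx, rfl⟩
    exact mem_P.2 ⟨x, subset_normalClosure hx, rfl⟩
  constructor
  · exact fun hg => mem_P.1 (normalClosure_le_normal hSP hg)
  · rintro ⟨y, hy, rfl⟩
    exact pow_mem_normalClosure_image_pow n hy

theorem conj_mem_of_semiconjBy {H : Subgroup G} {g x y : G} (h : SemiconjBy g x y) (hy : y ∈ H) :
    g * x * g⁻¹ ∈ H := by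
  rwa [h.eq, mul_inv_cancel_right]

theorem mem_normalizer_closure_of_mul_self_eq_one {S : Set G} {g : G} (hg : g * g = 1)
    (h : ∀ x ∈ S, g * x * g⁻¹ ∈ closure S) : g ∈ normalizer (closure S : Set G) := by
  have hle : closure S ≤ (closure S).comap (MulAut.conj g).toMonoidHom := (closure_le _).2 h
  refine mem_normalizer_iff.2 fun x => ⟨fun hx => hle hx, fun hx => ?_⟩
  have hx' : g * (g * x * g⁻¹) * g⁻¹ ∈ closure S := hle hx
  rwa [mul_assoc g x, ← mul_assoc, ← mul_assoc, hg, one_mul, mul_assoc, ← mul_inv_rev, hg,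
    inv_one, mul_one] at hx'

theorem normalClosure_pow_inf_normalClosure_pow {x : G} [IsMulCommutative (normalClosure {x})]
    [IsMulTorsionFree (normalClosure {x})] (s t : ℕ) :
    normalClosure {x ^ s} ⊓ normalClosure {x ^ t} = normalClosure {x ^ Nat.lcm s t} := by
  have mem_iff (n : ℕ) {g : G} :
      g ∈ normalClosure {x ^ n} ↔ ∃ y ∈ normalClosure {x}, y ^ n = g := by
    rw [← mem_normalClosure_image_pow_iff, Set.image_singleton]
  ext g
  rw [mem_inf, mem_iff, mem_iff, mem_iff]
  constructor
  · rintro ⟨⟨y, hy, rfl⟩, z, hz, hzy⟩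
    obtain ⟨w, hw⟩ := exists_pow_lcm_eq_of_pow_eq_pow
      (y := (⟨y, hy⟩ : normalClosure {x})) (z := ⟨z, hz⟩) (Subtype.ext hzy.symm)
    exact ⟨w, w.2, congrArg Subtype.val hw⟩
  · rintro ⟨w, hw, rfl⟩
    obtain ⟨m, hm⟩ := Nat.dvd_lcm_left s t
    obtain ⟨n, hn⟩ := Nat.dvd_lcm_right s t
    exact ⟨⟨w ^ m, pow_mem hw m, by rw [← pow_mul', ← hm]⟩,
      w ^ n, pow_mem hw n, by rw [← pow_mul', ← hn]⟩

theorem nonempty_closure_range_mk_mulEquiv {ι : Type*} {f : ι → G} (hf : closure (Set.range f) = ⊤)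
    {M N K : Subgroup G} [M.Normal] [N.Normal] [K.Normal] (hK : M ⊓ N = K) :
    Nonempty (closure (Set.range fun i =>
      ((QuotientGroup.mk' M (f i), QuotientGroup.mk' N (f i)) : (G ⧸ M) × (G ⧸ N))) ≃* G ⧸ K) := by
  let φ := (QuotientGroup.mk' M).prod (QuotientGroup.mk' N)
  have hker : φ.ker = K := by
    rw [MonoidHom.ker_prod, QuotientGroup.ker_mk', QuotientGroup.ker_mk', hK]
  have hrange : φ.range = closure (Set.range fun i => φ (f i)) := by
    rw [MonoidHom.range_eq_map, ← hf, MonoidHom.map_closure, ← Set.range_comp]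
    rfl
  exact ⟨(MulEquiv.subgroupCongr hrange).symm.trans <|
    (QuotientGroup.quotientKerEquivRange φ).symm.trans <|
      QuotientGroup.quotientMulEquivOfEq hker⟩

end Group

-- In long compositions, `simp` with the `rfl` lemmas combined here is very slow to kernel-check.
theorem iterate_comp_succ_apply {α : Type*} (f g : α → α) (n : ℕ) (x : α) :
    (f ∘ g)^[n + 1] x = (f ∘ g)^[n] (f (g x)) := by
  rw [Function.iterate_succ_apply, Function.comp_apply]

namespace W5

open Subgroup

section Generators

variable {i j : Fin 5}

theorem v_mul_v_pow (i j : Fin 5) : (v i * v j) ^ cox5 i j = 1 :=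
  PresentedGroup.one_of_mem ⟨(i, j), rfl⟩

@[simp]
theorem v_mul_self (i : Fin 5) : v i * v i = 1 := by
  simpa [cox5] using v_mul_v_pow i i

@[simp]
theorem v_mul_v_mul_cancel (i : Fin 5) (w : W5) : v i * (v i * w) = w := by
  rw [← mul_assoc, v_mul_self, one_mul]

theorem v_inv (i : Fin 5) : (v i)⁻¹ = v i := inv_eq_of_mul_eq_one_left (v_mul_self i)

theorem commute_v (h : cox5 i j = 2) : Commute (v i) (v j) := by
  have h1 := v_mul_v_pow i j
  rw [h, pow_two] at h1
  rw [Commute, SemiconjBy, eq_inv_of_mul_eq_one_left h1, mul_inv_rev, v_inv, v_inv]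

theorem braidRel_v (h : cox5 i j = 3) : BraidRel (v i) (v j) := by
  have h1 : v i * v j * v i * (v j * v i * v j) = 1 := by
    simpa only [h, pow_succ, pow_zero, one_mul, mul_assoc] using v_mul_v_pow i j
  rw [BraidRel, eq_inv_of_mul_eq_one_left h1]
  simp only [mul_inv_rev, v_inv, mul_assoc]

theorem commute_v_conj_v (h : cox5 i j = 4) : Commute (v i) (v j * v i * v j) := by
  have h1 : v i * (v j * v i * v j) * (v i * (v j * v i * v j)) = 1 := by
    simpa only [h, pow_succ, pow_zero, one_mul, mul_assoc] using v_mul_v_pow i j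
  rw [Commute, SemiconjBy, eq_inv_of_mul_eq_one_left h1]
  simp only [mul_inv_rev, v_inv, mul_assoc]

theorem semiconjBy_v_conj (i : Fin 5) (w : W5) : SemiconjBy (v i) w (v i * w * v i) := by
  simp only [SemiconjBy, mul_assoc, v_mul_self, mul_one]

theorem semiconjBy_v_symm {x y : W5} (h : SemiconjBy (v i) x y) : SemiconjBy (v i) y x :=
  semiconjBy_symm_of_mul_self_eq_one (v_mul_self i) h

end Generators

/-! ### Reflections of the parabolic subgroup of type `F₄` -/

/-- The reflection in the highest root `2β + 3γ + 4δ + 2ε` of the parabolic subgroup `⟨b, c, d, e⟩`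
of type `F₄`, where `β, γ, δ, ε` are the simple roots of `b, c, d, e`. -/
def theta : W5 := sg5 * tu5 * sg5

/-- The reflection in the root `θ - β`, where `θ` is the highest root. -/
def eta : W5 := v 1 * theta * v 1

/-- The reflection in the root `β + 2γ + 2δ`. -/
def mu : W5 := v 2 * v 3 * v 2 * v 1 * (v 2 * v 3 * v 2)

/-- The element `c d c e d c` of `⟨c, d, e⟩`, which carries the root `β` to `θ - β`. -/
def kappa : W5 := v 2 * v 3 * v 2 * v 4 * v 3 * v 2

@[simp]
theorem sg5_mul_self : sg5 * sg5 = 1 := by simp [sg5, mul_assoc]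

@[simp]
theorem eta_mul_self : eta * eta = 1 := by simp [eta, theta, sg5, tu5, mul_assoc]

theorem commute_v_two_sg5 : Commute (v 2) sg5 :=
  commute_of_semiconjBy (g := v 1 * v 2) (braidRel_v (by decide)).semiconjBy
    (by simp [SemiconjBy, sg5, mul_assoc]) (commute_v (by decide : cox5 1 3 = 2))

theorem commute_v_three_sg5 : Commute (v 3) sg5 :=
  commute_of_semiconjBy (g := v 1) (commute_v (by decide))
    (by simp [SemiconjBy, sg5, mul_assoc]) (commute_v_conj_v (by decide : cox5 3 2 = 4))

theorem commute_v_three_tu5 : Commute (v 3) tu5 :=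
  commute_of_semiconjBy (g := v 4 * v 3) (braidRel_v (by decide)).semiconjBy
    (by simp [SemiconjBy, tu5, mul_assoc]) (commute_v (by decide : cox5 4 2 = 2))

theorem commute_v_two_tu5 : Commute (v 2) tu5 :=
  commute_of_semiconjBy (g := v 4) (commute_v (by decide))
    (by simp [SemiconjBy, tu5, mul_assoc]) (commute_v_conj_v (by decide : cox5 2 3 = 4))

theorem commute_v_two_theta : Commute (v 2) theta :=
  (commute_v_two_sg5.mul_right commute_v_two_tu5).mul_right commute_v_two_sg5

theorem commute_v_three_theta : Commute (v 3) theta :=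
  (commute_v_three_sg5.mul_right commute_v_three_tu5).mul_right commute_v_three_sg5

theorem semiconjBy_v_two_v_one : SemiconjBy (v 2) (v 1) (v 1 * v 2 * v 1) := by
  rw [braidRel_v (by decide : cox5 1 2 = 3)]
  exact semiconjBy_v_conj 2 (v 1)

theorem semiconjBy_v_one_mu : SemiconjBy (v 2 * v 3 * v 2) (v 1) mu := by
  simp [SemiconjBy, mu, mul_assoc]

theorem semiconjBy_mu_v_one : SemiconjBy (v 2 * v 3 * v 2) mu (v 1) :=
  semiconjBy_symm_of_mul_self_eq_one (by simp [mul_assoc]) semiconjBy_v_one_mu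

theorem commute_v_three_mu : Commute (v 3) mu :=
  commute_of_semiconjBy (commute_v_conj_v (by decide : cox5 3 2 = 4)).symm semiconjBy_v_one_mu
    (commute_v (by decide))

theorem commute_v_one_mu : Commute (v 1) mu := by
  have hmu : SemiconjBy (v 2 * v 1) (v 3 * v 2 * v 3) mu := by
    have h31 : SemiconjBy (v 1) (v 3 * v 2 * v 3) (v 3 * (v 2 * v 1 * v 2) * v 3) := by
      have h : SemiconjBy (v 1) (v 3) (v 3) := commute_v (by decide)
      rw [braidRel_v (by decide : cox5 2 1 = 3)]
      exact (h.mul_right (semiconjBy_v_conj 1 (v 2))).mul_right h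
    have h2 := (semiconjBy_v_conj 2 _).mul_left h31
    simpa only [mu, mul_assoc] using h2
  exact commute_of_semiconjBy (braidRel_v (by decide)).semiconjBy hmu
    (commute_v_conj_v (by decide : cox5 2 3 = 4))

theorem semiconjBy_sg5_mu : SemiconjBy sg5 mu (v 1) := by
  have h : SemiconjBy (v 1 * (v 2 * v 3 * v 2) * v 1) mu (v 1) :=
    (SemiconjBy.mul_left (Commute.refl (v 1)) semiconjBy_mu_v_one).mul_left commute_v_one_mu
  simpa only [sg5, mul_assoc] using h

theorem semiconjBy_sg5_tu5 : SemiconjBy sg5 tu5 theta := by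
  rw [SemiconjBy, theta, mul_assoc, sg5_mul_self, mul_one]

theorem semiconjBy_v_four_tu5 : SemiconjBy (v 4) (v 3 * v 2 * v 3) tu5 := by
  simp [SemiconjBy, tu5, mul_assoc]

theorem commute_conj_v_tu5 : Commute (v 2 * v 3 * v 2) tu5 :=
  (commute_v_two_tu5.mul_left commute_v_three_tu5).mul_left commute_v_two_tu5

/-- `b` and `c` are carried to `b` and `θ` by the same element. -/
theorem braidRel_v_one_theta : BraidRel (v 1) theta := by
  have hb : SemiconjBy (sg5 * (v 2 * v 3 * v 2) * v 4 * v 3) (v 1) (v 1) :=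
    ((semiconjBy_sg5_mu.mul_left semiconjBy_v_one_mu).mul_left
      (commute_v (by decide))).mul_left (commute_v (by decide))
  have hc : SemiconjBy (sg5 * (v 2 * v 3 * v 2) * v 4 * v 3) (v 2) theta :=
    ((semiconjBy_sg5_tu5.mul_left commute_conj_v_tu5).mul_left
      semiconjBy_v_four_tu5).mul_left (semiconjBy_v_conj 3 (v 2))
  exact (braidRel_v (by decide)).of_semiconjBy hb hc

theorem braidRel_v_one_eta : BraidRel (v 1) eta :=
  braidRel_v_one_theta.of_semiconjBy (Commute.refl (v 1)) (semiconjBy_v_conj 1 theta)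

theorem semiconjBy_kappa_v_one : SemiconjBy kappa (v 1) eta := by
  have hd : SemiconjBy (v 3) (v 1 * v 2 * v 1) (v 1 * (v 3 * v 2 * v 3) * v 1) :=
    have h : SemiconjBy (v 3) (v 1) (v 1) := commute_v (by decide)
    (h.mul_right (semiconjBy_v_conj 3 (v 2))).mul_right h
  have he : SemiconjBy (v 4) (v 1 * (v 3 * v 2 * v 3) * v 1) (v 1 * tu5 * v 1) :=
    have h : SemiconjBy (v 4) (v 1) (v 1) := commute_v (by decide)
    (h.mul_right semiconjBy_v_four_tu5).mul_right h
  have hcdc : SemiconjBy (v 2 * v 3 * v 2) (v 1 * tu5 * v 1) eta := by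
    have h : SemiconjBy (v 1 * sg5 * v 1) (v 1 * tu5 * v 1) eta :=
      ((semiconjBy_v_conj 1 theta).mul_left semiconjBy_sg5_tu5).mul_left
        (semiconjBy_v_symm (semiconjBy_v_conj 1 tu5))
    simpa [sg5, mul_assoc] using h
  exact ((hcdc.mul_left he).mul_left hd).mul_left semiconjBy_v_two_v_one

theorem kappa_mul_conj_v : kappa * (v 2 * v 3 * v 2) = v 2 * v 3 * v 4 := by
  have h : v 2 * (v 4 * v 2) = v 4 := by
    rw [(commute_v (by decide : cox5 4 2 = 2)).eq, v_mul_v_mul_cancel]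
  simp [kappa, mul_assoc, h]

theorem commute_v_four_theta : Commute (v 4) theta := by
  have hd : SemiconjBy (v 1 * (v 2 * v 3 * v 4)) (v 3) (v 4) := by
    have h : SemiconjBy (v 1 * (v 2 * (v 3 * v 4))) (v 3) (v 4) :=
      SemiconjBy.mul_left (commute_v (by decide))
        (SemiconjBy.mul_left (commute_v (by decide)) (braidRel_v (by decide)).semiconjBy)
    simpa only [mul_assoc] using h
  have hmu : SemiconjBy (v 1 * (v 2 * v 3 * v 4)) mu theta := by
    rw [← kappa_mul_conj_v]
    exact (semiconjBy_v_symm (semiconjBy_v_conj 1 theta)).mul_left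
      (semiconjBy_kappa_v_one.mul_left semiconjBy_mu_v_one)
  exact commute_of_semiconjBy hd hmu commute_v_three_mu

theorem commute_kappa_v_zero : Commute kappa (v 0) := by
  have hc : Commute (v 2) (v 0) := commute_v (by decide)
  have hd : Commute (v 3) (v 0) := commute_v (by decide)
  have he : Commute (v 4) (v 0) := commute_v (by decide)
  exact ((((hc.mul_left hd).mul_left hc).mul_left he).mul_left hd).mul_left hc

theorem braidRel_v_zero_eta : BraidRel (v 0) eta :=
  (braidRel_v (by decide)).of_semiconjBy commute_kappa_v_zero semiconjBy_kappa_v_one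

/-! ### The translation lattice -/

/-- The translations along a basis of the translation lattice: `transl 0` is the product of `a` and
the reflection in the highest root, and the others are its conjugates by `b`, `cb` and `dcb`. -/
def transl : Fin 4 → W5 :=
  let t := v 0 * sg5 * tu5 * sg5
  ![t, v 1 * t * v 1, v 2 * (v 1 * t * v 1) * v 2, v 3 * (v 2 * (v 1 * t * v 1) * v 2) * v 3]

theorem transl_zero_eq_mul_theta : transl 0 = v 0 * theta := by
  simp [transl, theta, mul_assoc]

theorem transl_zero_eq_mul_conj_eta : transl 0 = v 0 * (v 1 * eta * v 1) := by
  simp [transl_zero_eq_mul_theta, eta, mul_assoc]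

theorem semiconjBy_v_one_transl_zero : SemiconjBy (v 1) (transl 0) (transl 1) :=
  semiconjBy_v_conj 1 (transl 0)

theorem semiconjBy_v_one_transl_one : SemiconjBy (v 1) (transl 1) (transl 0) :=
  semiconjBy_v_symm semiconjBy_v_one_transl_zero

theorem semiconjBy_v_two_transl_one : SemiconjBy (v 2) (transl 1) (transl 2) :=
  semiconjBy_v_conj 2 (transl 1)

theorem semiconjBy_v_two_transl_two : SemiconjBy (v 2) (transl 2) (transl 1) :=
  semiconjBy_v_symm semiconjBy_v_two_transl_one

theorem semiconjBy_v_three_transl_two : SemiconjBy (v 3) (transl 2) (transl 3) :=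
  semiconjBy_v_conj 3 (transl 2)

theorem semiconjBy_v_three_transl_three : SemiconjBy (v 3) (transl 3) (transl 2) :=
  semiconjBy_v_symm semiconjBy_v_three_transl_two

theorem commute_v_two_transl_zero : Commute (v 2) (transl 0) := by
  rw [transl_zero_eq_mul_theta]
  exact (commute_v (by decide)).mul_right commute_v_two_theta

theorem commute_v_three_transl_zero : Commute (v 3) (transl 0) := by
  rw [transl_zero_eq_mul_theta]
  exact (commute_v (by decide)).mul_right commute_v_three_theta

theorem commute_v_four_transl_zero : Commute (v 4) (transl 0) := by
  rw [transl_zero_eq_mul_theta]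
  exact (commute_v (by decide)).mul_right commute_v_four_theta

theorem commute_v_three_transl_one : Commute (v 3) (transl 1) :=
  commute_of_semiconjBy (commute_v (by decide)) semiconjBy_v_one_transl_zero
    commute_v_three_transl_zero

theorem commute_v_four_transl_one : Commute (v 4) (transl 1) :=
  commute_of_semiconjBy (commute_v (by decide)) semiconjBy_v_one_transl_zero
    commute_v_four_transl_zero

theorem commute_v_one_transl_two : Commute (v 1) (transl 2) :=
  commute_of_semiconjBy (braidRel_v (by decide)).semiconjBy
    (semiconjBy_v_two_transl_one.mul_left semiconjBy_v_one_transl_zero) commute_v_two_transl_zero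

theorem commute_v_four_transl_two : Commute (v 4) (transl 2) :=
  commute_of_semiconjBy (commute_v (by decide)) semiconjBy_v_two_transl_one
    commute_v_four_transl_one

theorem commute_v_one_transl_three : Commute (v 1) (transl 3) :=
  commute_of_semiconjBy (commute_v (by decide)) semiconjBy_v_three_transl_two
    commute_v_one_transl_two

theorem commute_transl_zero_one : Commute (transl 0) (transl 1) := by
  rw [show transl 1 = v 1 * transl 0 * v 1 from rfl, transl_zero_eq_mul_conj_eta]
  exact (braidRel_v (by decide)).commute_mul_conj braidRel_v_zero_eta braidRel_v_one_eta
    (v_mul_self 1)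

theorem commute_transl_zero_two : Commute (transl 0) (transl 2) :=
  commute_of_semiconjBy commute_v_two_transl_zero semiconjBy_v_two_transl_one
    commute_transl_zero_one

theorem commute_transl_zero_three : Commute (transl 0) (transl 3) :=
  commute_of_semiconjBy commute_v_three_transl_zero semiconjBy_v_three_transl_two
    commute_transl_zero_two

theorem commute_transl_one_two : Commute (transl 1) (transl 2) :=
  commute_of_semiconjBy semiconjBy_v_one_transl_zero commute_v_one_transl_two
    commute_transl_zero_two

theorem commute_transl_one_three : Commute (transl 1) (transl 3) :=
  commute_of_semiconjBy semiconjBy_v_one_transl_zero commute_v_one_transl_three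
    commute_transl_zero_three

theorem semiconjBy_eta_transl_zero :
    SemiconjBy eta (transl 0) (transl 0 * (transl 1)⁻¹) := by
  rw [show transl 1 = v 1 * transl 0 * v 1 from rfl, transl_zero_eq_mul_conj_eta]
  exact braidRel_v_zero_eta.semiconjBy_mul_conj braidRel_v_one_eta (v_mul_self 0) (v_mul_self 1)

theorem commute_kappa_transl_zero : Commute kappa (transl 0) := by
  have hcd := commute_v_two_transl_zero.mul_left commute_v_three_transl_zero
  exact (((hcd.mul_left commute_v_two_transl_zero).mul_left commute_v_four_transl_zero).mul_left
    commute_v_three_transl_zero).mul_left commute_v_two_transl_zero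

theorem semiconjBy_kappa_transl_one :
    SemiconjBy kappa (transl 1) (transl 0 * (transl 1)⁻¹) := by
  have h : eta * kappa * v 1 = kappa := by
    rw [mul_assoc, semiconjBy_kappa_v_one.eq, ← mul_assoc, eta_mul_self, one_mul]
  rw [← h]
  exact (semiconjBy_eta_transl_zero.mul_left commute_kappa_transl_zero).mul_left
    semiconjBy_v_one_transl_one

theorem semiconjBy_v_four_conj_transl_three :
    SemiconjBy (v 4) (v 2 * transl 3 * v 2) (transl 0 * (transl 3)⁻¹) := by
  have hcd : SemiconjBy (v 2 * v 3 * v 2) (v 2 * transl 3 * v 2) (transl 1) :=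
    (semiconjBy_v_two_transl_two.mul_left semiconjBy_v_three_transl_three).mul_left
      (semiconjBy_v_symm (semiconjBy_v_conj 2 _))
  have hc : SemiconjBy (v 2) (transl 0 * (transl 1)⁻¹) (transl 0 * (transl 2)⁻¹) :=
    SemiconjBy.mul_right commute_v_two_transl_zero semiconjBy_v_two_transl_one.inv_right
  have hd : SemiconjBy (v 3) (transl 0 * (transl 2)⁻¹) (transl 0 * (transl 3)⁻¹) :=
    SemiconjBy.mul_right commute_v_three_transl_zero semiconjBy_v_three_transl_two.inv_right
  have he : v 3 * (v 2 * (kappa * (v 2 * v 3 * v 2))) = v 4 := by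
    rw [kappa_mul_conj_v]
    simp only [mul_assoc, v_mul_v_mul_cancel]
  rw [← he]
  exact hd.mul_left (hc.mul_left (semiconjBy_kappa_transl_one.mul_left hcd))

theorem semiconjBy_v_four_transl_three :
    SemiconjBy (v 4) (transl 3) ((v 2 * transl 3 * v 2)⁻¹ * transl 0) := by
  have h := (semiconjBy_v_symm semiconjBy_v_four_conj_transl_three).inv_right.mul_right
    commute_v_four_transl_zero
  simpa only [mul_inv_rev, inv_inv, inv_mul_cancel_right] using h

theorem semiconjBy_v_one_conj_transl_three :
    SemiconjBy (v 1) (v 2 * transl 3 * v 2)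
      (transl 1 * (transl 0)⁻¹ * (v 2 * transl 3 * v 2)) := by
  have hb : SemiconjBy (v 1) (transl 0 * (transl 3)⁻¹) (transl 1 * (transl 3)⁻¹) :=
    semiconjBy_v_one_transl_zero.mul_right commute_v_one_transl_three.inv_right
  have he : SemiconjBy (v 4) (transl 1 * (transl 3)⁻¹)
      (transl 1 * ((v 2 * transl 3 * v 2)⁻¹ * transl 0)⁻¹) :=
    SemiconjBy.mul_right commute_v_four_transl_one semiconjBy_v_four_transl_three.inv_right
  have h : v 4 * v 1 * v 4 = v 1 := by
    rw [(commute_v (by decide : cox5 4 1 = 2)).eq, mul_assoc, v_mul_self, mul_one]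
  have hebe := (he.mul_left hb).mul_left semiconjBy_v_four_conj_transl_three
  rw [h] at hebe
  simpa only [mul_inv_rev, inv_inv, mul_assoc] using hebe

/-- The two sides of `t₁ t₀⁻¹ z = t₂ t₀⁻¹ t₃`, where `z = c t₃ c`, are exchanged by `c`, and the
left one commutes with `c` since it is the image of `t₃` under `bc`. -/
theorem conj_transl_three : v 2 * transl 3 * v 2 = (transl 1)⁻¹ * transl 2 * transl 3 := by
  set z := v 2 * transl 3 * v 2
  have hcomm : Commute (v 2) (transl 1 * (transl 0)⁻¹ * z) :=
    commute_of_semiconjBy (braidRel_v (by decide)).semiconjBy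
      (semiconjBy_v_one_conj_transl_three.mul_left (semiconjBy_v_conj 2 (transl 3)))
      commute_v_one_transl_three
  have hsemi : SemiconjBy (v 2) (transl 1 * (transl 0)⁻¹ * z)
      (transl 2 * (transl 0)⁻¹ * transl 3) :=
    (semiconjBy_v_two_transl_one.mul_right commute_v_two_transl_zero.inv_right).mul_right
      (semiconjBy_v_symm (semiconjBy_v_conj 2 (transl 3)))
  have h : transl 1 * (transl 0)⁻¹ * z = transl 2 * (transl 0)⁻¹ * transl 3 :=
    mul_right_cancel (hcomm.eq.symm.trans hsemi.eq)
  calc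
    z = transl 0 * ((transl 1)⁻¹ * (transl 2 * (transl 0)⁻¹ * transl 3)) := by
      rw [← h]; simp only [mul_assoc, inv_mul_cancel_left, mul_inv_cancel_left]
    _ = (transl 1)⁻¹ * transl 2 * transl 3 := by
      have h0 := commute_transl_zero_one.inv_right.mul_right commute_transl_zero_two
      rw [← mul_assoc, ← mul_assoc, ← mul_assoc, mul_assoc (transl 0), h0.eq,
        mul_inv_cancel_right]

theorem semiconjBy_v_two_transl_three :
    SemiconjBy (v 2) (transl 3) ((transl 1)⁻¹ * transl 2 * transl 3) :=
  conj_transl_three ▸ semiconjBy_v_conj 2 (transl 3)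

theorem commute_transl_two_three : Commute (transl 2) (transl 3) := by
  have h : Commute (transl 2) ((transl 1)⁻¹ * transl 2 * transl 3) :=
    commute_of_semiconjBy semiconjBy_v_two_transl_one semiconjBy_v_two_transl_three
      commute_transl_one_three
  have h2 := (commute_transl_one_two.symm.inv_right.mul_right (.refl (transl 2))).inv_right
  simpa only [inv_mul_cancel_left] using h2.mul_right h

theorem pairwise_commute_transl : Pairwise fun i j => Commute (transl i) (transl j) := by
  intro i j hij
  wlog hlt : i < j generalizing i j
  · exact (this hij.symm (hij.symm.lt_of_le (not_lt.1 hlt))).symm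
  fin_cases i <;> fin_cases j
  all_goals first
    | exact absurd hlt (by decide)
    | exact commute_transl_zero_one
    | exact commute_transl_zero_two
    | exact commute_transl_zero_three
    | exact commute_transl_one_two
    | exact commute_transl_one_three
    | exact commute_transl_two_three

theorem transl_mem_closure (i : Fin 4) : transl i ∈ closure (Set.range transl) :=
  subset_closure ⟨i, rfl⟩

theorem conj_transl_three_mem_closure :
    (transl 1)⁻¹ * transl 2 * transl 3 ∈ closure (Set.range transl) :=
  mul_mem (mul_mem (inv_mem (transl_mem_closure 1)) (transl_mem_closure 2)) (transl_mem_closure 3)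

theorem conj_transl_mem_closure :
    ∀ i : Fin 5, i ≠ 0 → ∀ j, v i * transl j * (v i)⁻¹ ∈ closure (Set.range transl)
  | 0, hi, _ => absurd rfl hi
  | 1, _, 0 => conj_mem_of_semiconjBy semiconjBy_v_one_transl_zero (transl_mem_closure 1)
  | 1, _, 1 => conj_mem_of_semiconjBy semiconjBy_v_one_transl_one (transl_mem_closure 0)
  | 1, _, 2 => conj_mem_of_semiconjBy commute_v_one_transl_two (transl_mem_closure 2)
  | 1, _, 3 => conj_mem_of_semiconjBy commute_v_one_transl_three (transl_mem_closure 3)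
  | 2, _, 0 => conj_mem_of_semiconjBy commute_v_two_transl_zero (transl_mem_closure 0)
  | 2, _, 1 => conj_mem_of_semiconjBy semiconjBy_v_two_transl_one (transl_mem_closure 2)
  | 2, _, 2 => conj_mem_of_semiconjBy semiconjBy_v_two_transl_two (transl_mem_closure 1)
  | 2, _, 3 => conj_mem_of_semiconjBy semiconjBy_v_two_transl_three conj_transl_three_mem_closure
  | 3, _, 0 => conj_mem_of_semiconjBy commute_v_three_transl_zero (transl_mem_closure 0)
  | 3, _, 1 => conj_mem_of_semiconjBy commute_v_three_transl_one (transl_mem_closure 1)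
  | 3, _, 2 => conj_mem_of_semiconjBy semiconjBy_v_three_transl_two (transl_mem_closure 3)
  | 3, _, 3 => conj_mem_of_semiconjBy semiconjBy_v_three_transl_three (transl_mem_closure 2)
  | 4, _, 0 => conj_mem_of_semiconjBy commute_v_four_transl_zero (transl_mem_closure 0)
  | 4, _, 1 => conj_mem_of_semiconjBy commute_v_four_transl_one (transl_mem_closure 1)
  | 4, _, 2 => conj_mem_of_semiconjBy commute_v_four_transl_two (transl_mem_closure 2)
  | 4, _, 3 => conj_mem_of_semiconjBy semiconjBy_v_four_transl_three <|
    mul_mem (inv_mem (conj_transl_three ▸ conj_transl_three_mem_closure)) (transl_mem_closure 0)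

theorem closure_range_v : closure (Set.range v) = ⊤ := PresentedGroup.closure_range_of rels5

theorem closure_range_transl_normal : (closure (Set.range transl)).Normal := by
  let N : Subgroup W5 := normalizer (closure (Set.range transl) : Set W5)
  have hv (i : Fin 5) (hi : i ≠ 0) : v i ∈ N :=
    mem_normalizer_closure_of_mul_self_eq_one (v_mul_self i) <| by
      rintro _ ⟨j, rfl⟩
      exact conj_transl_mem_closure i hi j
  have hb : v 1 ∈ N := hv 1 (by decide)
  have hc : v 2 ∈ N := hv 2 (by decide)
  have hd : v 3 ∈ N := hv 3 (by decide)
  have he : v 4 ∈ N := hv 4 (by decide)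
  have hsg : sg5 ∈ N := mul_mem (mul_mem (mul_mem (mul_mem hb hc) hd) hc) hb
  have htu : tu5 ∈ N := mul_mem (mul_mem (mul_mem (mul_mem he hd) hc) hd) he
  have ht : transl 0 ∈ N := le_normalizer (transl_mem_closure 0)
  have h0 : v 0 ∈ N := by
    rw [transl_zero_eq_mul_theta] at ht
    exact (mul_mem_cancel_right (mul_mem (mul_mem hsg htu) hsg)).1 ht
  rw [← normalizer_eq_top_iff, ← top_le_iff, ← closure_range_v, closure_le]
  rintro _ ⟨i, rfl⟩
  obtain rfl | hi := eq_or_ne i 0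
  exacts [h0, hv i hi]

theorem normalClosure_transl_zero : normalClosure {transl 0} = closure (Set.range transl) := by
  have := closure_range_transl_normal
  refine le_antisymm (normalClosure_le_normal ?_) ?_
  · exact Set.singleton_subset_iff.2 (transl_mem_closure 0)
  · have conj_mem {i : Fin 5} {x y : W5} (h : SemiconjBy (v i) x y)
        (hx : x ∈ normalClosure {transl 0}) : y ∈ normalClosure {transl 0} := by
      rw [← mul_inv_eq_of_eq_mul h.eq]
      exact normalClosure_normal.conj_mem x hx (v i)
    have h0 : transl 0 ∈ normalClosure {transl 0} := subset_normalClosure rfl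
    have h1 := conj_mem semiconjBy_v_one_transl_zero h0
    have h2 := conj_mem semiconjBy_v_two_transl_one h1
    have h3 := conj_mem semiconjBy_v_three_transl_two h2
    rw [closure_le]
    rintro _ ⟨j, rfl⟩
    fin_cases j
    exacts [h0, h1, h2, h3]

/-! ### The affine action -/

/-- The images of the generators under `affineAction`, as maps of `ℤ⁴`: the maps by which the
generators act on the translation lattice with basis `transl i`, except that the linear part of `a`
is composed with the translation `transl 0`. -/
def affineReflection : Fin 5 → (Fin 4 → ℤ) → Fin 4 → ℤ
  | 0, p => ![1 - p 0 - p 1 - p 2 - p 3, p 1, p 2, p 3]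
  | 1, p => ![p 1, p 0, p 2, p 3]
  | 2, p => ![p 0, p 2 - p 3, p 1 + p 3, p 3]
  | 3, p => ![p 0, p 1, p 3, p 2]
  | 4, p => ![p 0 + p 3, p 1 + p 3, p 2 - p 3, -p 3]

section Coordinates

variable (x y z w : ℤ)

theorem affineReflection_zero :
    affineReflection 0 ![x, y, z, w] = ![1 - x - y - z - w, y, z, w] := by
  simp [affineReflection]

theorem affineReflection_one : affineReflection 1 ![x, y, z, w] = ![y, x, z, w] := by
  simp [affineReflection]

theorem affineReflection_two :
    affineReflection 2 ![x, y, z, w] = ![x, z - w, y + w, w] := by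
  simp [affineReflection]

theorem affineReflection_three : affineReflection 3 ![x, y, z, w] = ![x, y, w, z] := by
  simp [affineReflection]

theorem affineReflection_four :
    affineReflection 4 ![x, y, z, w] = ![x + w, y + w, z - w, -w] := by
  simp [affineReflection]

theorem affineReflection_involutive (i : Fin 5) : Function.Involutive (affineReflection i) := by
  intro p
  ext j
  fin_cases i <;> fin_cases j <;> simp [affineReflection]
  ring

theorem exists_eq_cons_four (p : Fin 4 → ℤ) : ∃ x y z w, p = ![x, y, z, w] :=
  ⟨p 0, p 1, p 2, p 3, by ext k; fin_cases k <;> rfl⟩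

theorem iterate_affineReflection_comp (i j : Fin 5) :
    (affineReflection i ∘ affineReflection j)^[cox5 i j] = id := by
  ext1 p
  obtain ⟨x, y, z, w, rfl⟩ := exists_eq_cons_four p
  fin_cases i <;> fin_cases j <;>
    simp [cox5, iterate_comp_succ_apply, -Function.iterate_succ, affineReflection_zero,
      affineReflection_one, affineReflection_two, affineReflection_three,
      affineReflection_four] <;> grind

/-- The action of `W5` on `ℤ⁴` by affine maps. -/
def affineAction : W5 →* Equiv.Perm (Fin 4 → ℤ) :=
  PresentedGroup.toGroup (f := fun i => (affineReflection_involutive i).toPerm) <| by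
    rintro _ ⟨⟨i, j⟩, rfl⟩
    refine DFunLike.coe_injective ?_
    simpa only [map_pow, map_mul, FreeGroup.lift_apply_of, Equiv.Perm.coe_pow, Equiv.Perm.coe_mul]
      using! iterate_affineReflection_comp i j

theorem affineAction_mul_apply (g h : W5) (p : Fin 4 → ℤ) :
    affineAction (g * h) p = affineAction g (affineAction h p) := by
  rw [map_mul, Equiv.Perm.mul_apply]

theorem affineAction_v (i : Fin 5) (p : Fin 4 → ℤ) :
    affineAction (v i) p = affineReflection i p := by
  simp [affineAction, v]

theorem affineAction_sg5 :
    affineAction sg5 ![x, y, z, w] = ![-x, y, x + z, x + w] := by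
  simp only [sg5, affineAction_mul_apply, affineAction_v, affineReflection_one,
    affineReflection_two, affineReflection_three]
  ring_nf

theorem affineAction_tu5 :
    affineAction tu5 ![x, y, z, w] = ![x + y + z + w, y, -y - w, -y - z] := by
  simp only [tu5, affineAction_mul_apply, affineAction_v, affineReflection_two,
    affineReflection_three, affineReflection_four]
  ring_nf

theorem affineAction_transl_zero :
    affineAction (transl 0) ![x, y, z, w] = ![x + 1, y, z, w] := by
  simp only [transl_zero_eq_mul_theta, theta, affineAction_mul_apply, affineAction_sg5,
    affineAction_tu5, affineAction_v, affineReflection_zero]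
  ring_nf

theorem affineAction_transl_one :
    affineAction (transl 1) ![x, y, z, w] = ![x, y + 1, z, w] := by
  simp only [show transl 1 = v 1 * transl 0 * v 1 from rfl, affineAction_mul_apply,
    affineAction_v, affineAction_transl_zero, affineReflection_one]

theorem affineAction_transl_two :
    affineAction (transl 2) ![x, y, z, w] = ![x, y, z + 1, w] := by
  simp only [show transl 2 = v 2 * transl 1 * v 2 from rfl, affineAction_mul_apply,
    affineAction_v, affineAction_transl_one, affineReflection_two]
  ring_nf

theorem affineAction_transl_three :
    affineAction (transl 3) ![x, y, z, w] = ![x, y, z, w + 1] := by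
  simp only [show transl 3 = v 3 * transl 2 * v 3 from rfl, affineAction_mul_apply,
    affineAction_v, affineAction_transl_two, affineReflection_three]

end Coordinates

theorem affineAction_transl (i : Fin 4) :
    affineAction (transl i) = Equiv.addRight (Pi.single i 1) := by
  ext p : 1
  obtain ⟨x, y, z, w, rfl⟩ := exists_eq_cons_four p
  ext j
  fin_cases i <;> fin_cases j <;>
    simp [affineAction_transl_zero, affineAction_transl_one, affineAction_transl_two,
      affineAction_transl_three]


theorem pairwise_commute_zpowersHom_transl :
    Pairwise fun i j => ∀ m n,
      Commute (zpowersHom W5 (transl i) m) (zpowersHom W5 (transl j) n) := by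
  intro i j hij m n
  simpa only [zpowersHom_apply] using ((pairwise_commute_transl hij).zpow_left _).zpow_right _

/-- The homomorphism `ℤ⁴ → W5` sending the standard basis to the translations `transl i`. -/
def translHom : (Fin 4 → Multiplicative ℤ) →* W5 :=
  MonoidHom.noncommPiCoprod (fun i => zpowersHom W5 (transl i)) pairwise_commute_zpowersHom_transl

theorem range_translHom : translHom.range = closure (Set.range transl) := by
  rw [translHom, MonoidHom.noncommPiCoprod_range, ← Set.iUnion_singleton_eq_range,
    Subgroup.closure_iUnion]
  simp only [← zpowers_eq_closure]
  rfl

theorem affineAction_translHom (k : Fin 4 → Multiplicative ℤ) :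
    affineAction (translHom k) = Equiv.addRight fun i => (k i).toAdd := by
  induction k using Pi.mulSingle_induction with
  | one => ext p i; simp
  | mul k l hk hl => ext p i; simp [hk, hl, add_comm, add_left_comm]
  | mulSingle i n =>
    rw [translHom, MonoidHom.noncommPiCoprod_mulSingle, zpowersHom_apply, map_zpow,
      affineAction_transl, Equiv.zsmul_addRight]
    congr 1
    ext j
    by_cases hij : j = i
    · subst hij; simp
    · simp [hij]

theorem translHom_injective : Function.Injective translHom := by
  intro k l h
  have hkl := congrArg (fun g => affineAction g 0) h
  simpa [affineAction_translHom, funext_iff] using hkl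

instance : IsMulCommutative (normalClosure {transl 0}) := by
  rw [normalClosure_transl_zero, ← range_translHom]
  infer_instance

instance : IsMulTorsionFree (normalClosure {transl 0}) := by
  rw [normalClosure_transl_zero, ← range_translHom]
  let e := MonoidHom.ofInjective translHom_injective
  exact e.symm.injective.isMulTorsionFree e.symm.toMonoidHom

end W5

/-- The mix of [3,3,4,3]_{(s,0,0,0)} and [3,3,4,3]_{(t,0,0,0)} is
[3,3,4,3]_{(l,0,0,0)} where l = lcm(s,t). -/
theorem stmt_17 (s t : ℕ) (hs : 2 ≤ s) (ht : 2 ≤ t) :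
    Nonempty
      ((Subgroup.closure
          (Set.range fun i : Fin 5 => ((piH s (v i), piH t (v i)) : Hq s × Hq t))) ≃*
        Hq (Nat.lcm s t)) :=
  nonempty_closure_range_mk_mulEquiv W5.closure_range_v
    (normalClosure_pow_inf_normalClosure_pow (x := W5.transl 0) s t)
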